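/- Let Ω be an open subset of ℝⁿ and let f = (u, v) be an H-continuous pair on Ω. Then the pair g = (−v, −u) is H-continuous, and the constant zero pair (0, 0) is the unique H-continuous pair (p_l, p_u) satisfying u(x) − v(x) ≤ p_l(x) ≤ p_u(x) ≤ v(x) − u(x) for all x ∈ Ω; that is, f ⊕ g is the zero function, so g is an additive inverse of f. -/

import Mathlib

open Set

/-- Points of `ℝⁿ`. -/
abbrev Pt (n : ℕ) := EuclideanSpace ℝ (Fin n)

/-- Lower Baire operator `I(D,Ω,f)(x) = sup_{δ>0} inf { f y : y ∈ B_δ(x) ∩ D }`,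
where `B_δ(x) = { y ∈ Ω : ‖y - x‖ < δ }`. -/
noncomputable def Ilow {n : ℕ} (D Om : Set (Pt n)) (f : Pt n → ℝ) (x : Pt n) : ℝ :=
  sSup {a : ℝ | ∃ δ : ℝ, 0 < δ ∧
    a = sInf (f '' {y | y ∈ Om ∧ ‖y - x‖ < δ ∧ y ∈ D})}

/-- Upper Baire operator `S(D,Ω,f)(x) = inf_{δ>0} sup { f y : y ∈ B_δ(x) ∩ D }`. -/
noncomputable def Shigh {n : ℕ} (D Om : Set (Pt n)) (f : Pt n → ℝ) (x : Pt n) : ℝ :=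
  sInf {a : ℝ | ∃ δ : ℝ, 0 < δ ∧
    a = sSup (f '' {y | y ∈ Om ∧ ‖y - x‖ < δ ∧ y ∈ D})}

/-- `f`, defined on `D ⊆ Ω`, is locally bounded relative to `Ω`. -/
def LocBddOn {n : ℕ} (Om D : Set (Pt n)) (f : Pt n → ℝ) : Prop :=
  ∀ x ∈ Om, ∃ δ : ℝ, 0 < δ ∧ ∃ M : ℝ,
    ∀ y, y ∈ Om → ‖y - x‖ < δ → y ∈ D → |f y| < M

/-- `(u, v)` encodes an interval-valued function `x ↦ [u x, v x]` on `Om`. -/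
def IntervalPair {n : ℕ} (Om : Set (Pt n)) (u v : Pt n → ℝ) : Prop :=
  LocBddOn Om Om u ∧ LocBddOn Om Om v ∧ ∀ x ∈ Om, u x ≤ v x

/-- The pair `(u, v)` is S-continuous on `Om`: `I(u) = u` and `S(v) = v`. -/
def SCont {n : ℕ} (Om : Set (Pt n)) (u v : Pt n → ℝ) : Prop :=
  ∀ x ∈ Om, Ilow Om Om u x = u x ∧ Shigh Om Om v x = v x

/-- The pair `(u, v)` is Hausdorff continuous on `Om`. -/
def HCont {n : ℕ} (Om : Set (Pt n)) (u v : Pt n → ℝ) : Prop :=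
  ∀ p q : Pt n → ℝ, LocBddOn Om Om p → LocBddOn Om Om q →
    (∀ x ∈ Om, u x ≤ p x ∧ p x ≤ q x ∧ q x ≤ v x) →
    ∀ x ∈ Om, Ilow Om Om p x = u x ∧ Shigh Om Om q x = v x

/-- `(u, v)` is an H-continuous interval pair on `Om`. -/
def HContPair {n : ℕ} (Om : Set (Pt n)) (u v : Pt n → ℝ) : Prop :=
  IntervalPair Om u v ∧ HCont Om u v

/-- Lower endpoint of the pointwise interval product. -/
noncomputable def imin {n : ℕ} (u₁ v₁ u₂ v₂ : Pt n → ℝ) (x : Pt n) : ℝ :=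
  min (min (u₁ x * u₂ x) (u₁ x * v₂ x)) (min (v₁ x * u₂ x) (v₁ x * v₂ x))

/-- Upper endpoint of the pointwise interval product. -/
noncomputable def imax {n : ℕ} (u₁ v₁ u₂ v₂ : Pt n → ℝ) (x : Pt n) : ℝ :=
  max (max (u₁ x * u₂ x) (u₁ x * v₂ x)) (max (v₁ x * u₂ x) (v₁ x * v₂ x))

/-- `(pl, pu)` is the H-continuous pair contained pointwise in the interval sum of
`(u₁, v₁)` and `(u₂, v₂)`, i.e. `(pl, pu) = (u₁,v₁) ⊕ (u₂,v₂)`. -/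
def IsOplus {n : ℕ} (Om : Set (Pt n)) (u₁ v₁ u₂ v₂ pl pu : Pt n → ℝ) : Prop :=
  HContPair Om pl pu ∧
    ∀ x ∈ Om, u₁ x + u₂ x ≤ pl x ∧ pl x ≤ pu x ∧ pu x ≤ v₁ x + v₂ x

/-- `(ql, qu)` is the H-continuous pair contained pointwise in the interval product of
`(u₁, v₁)` and `(u₂, v₂)`, i.e. `(ql, qu) = (u₁,v₁) ⊗ (u₂,v₂)`. -/
def IsOtimes {n : ℕ} (Om : Set (Pt n)) (u₁ v₁ u₂ v₂ ql qu : Pt n → ℝ) : Prop :=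
  HContPair Om ql qu ∧
    ∀ x ∈ Om, imin u₁ v₁ u₂ v₂ x ≤ ql x ∧ ql x ≤ qu x ∧ qu x ≤ imax u₁ v₁ u₂ v₂ x

lemma Ilow_eq_neg {n : ℕ} (D Om : Set (Pt n)) (f : Pt n → ℝ) (x : Pt n) :
    Ilow D Om f x = - Shigh D Om (fun y => - f y) x := by
  unfold Ilow Shigh
  rw [Real.sInf_def, neg_neg]
  congr 1
  ext a
  simp only [Set.mem_setOf_eq, Set.mem_neg]
  refine exists_congr fun δ => and_congr_right fun _ => ?_
  have : (fun y => - f y) '' {y | y ∈ Om ∧ ‖y - x‖ < δ ∧ y ∈ D}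
      = - (f '' {y | y ∈ Om ∧ ‖y - x‖ < δ ∧ y ∈ D}) := by
    rw [← Set.image_neg_eq_neg, Set.image_image]
  rw [this, Real.sInf_def]
  constructor <;> intro h <;> linarith

lemma LocBddOn.neg' {n : ℕ} {Om : Set (Pt n)} {f : Pt n → ℝ} (h : LocBddOn Om Om f) :
    LocBddOn Om Om (fun x => - f x) := by
  intro x hx
  obtain ⟨δ, hδ, M, hM⟩ := h x hx
  exact ⟨δ, hδ, M, fun y h1 h2 h3 => by simpa [abs_neg] using hM y h1 h2 h3⟩

/-- bounded above on every ball -/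
def BA {n : ℕ} (Om : Set (Pt n)) (f : Pt n → ℝ) : Prop :=
  ∀ x ∈ Om, ∀ δ : ℝ, BddAbove (f '' {y | y ∈ Om ∧ ‖y - x‖ < δ ∧ y ∈ Om})

lemma shigh_bddBelow {n : ℕ} {Om : Set (Pt n)} (f : Pt n → ℝ) {x : Pt n} (hx : x ∈ Om) :
    BddBelow {a : ℝ | ∃ δ : ℝ, 0 < δ ∧
      a = sSup (f '' {y | y ∈ Om ∧ ‖y - x‖ < δ ∧ y ∈ Om})} := by
  refine ⟨min (f x) 0, ?_⟩
  rintro a ⟨δ, hδ, rfl⟩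
  by_cases hb : BddAbove (f '' {y | y ∈ Om ∧ ‖y - x‖ < δ ∧ y ∈ Om})
  · exact (min_le_left _ _).trans (le_csSup hb ⟨x, ⟨hx, by simpa using hδ, hx⟩, rfl⟩)
  · rw [Real.sSup_of_not_bddAbove hb]
    exact min_le_right _ _

lemma BA_of_shigh {n : ℕ} {Om : Set (Pt n)} {f : Pt n → ℝ}
    (h : ∀ x ∈ Om, Shigh Om Om f x = f x) : BA Om f := by
  intro x hx δ
  by_contra hb
  apply hb
  refine ⟨0, ?_⟩
  rintro _ ⟨z, ⟨hz, _, _⟩, rfl⟩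
  rw [← h z hz]
  refine csInf_le (shigh_bddBelow f hz) ⟨max δ 0 + ‖x - z‖ + 1, by positivity, ?_⟩
  rw [Real.sSup_of_not_bddAbove]
  intro hb'
  apply hb
  refine hb'.mono (Set.image_mono ?_)
  rintro y ⟨h1, h2, _⟩
  refine ⟨h1, ?_, h1⟩
  have := norm_sub_le_norm_sub_add_norm_sub y x z
  have := le_max_left δ 0
  linarith

lemma shigh_le {n : ℕ} {Om : Set (Pt n)} {f : Pt n → ℝ} {x : Pt n} (hx : x ∈ Om)
    {δ c : ℝ} (hδ : 0 < δ) (hc : ∀ y ∈ Om, ‖y - x‖ < δ → f y ≤ c) :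
    Shigh Om Om f x ≤ c := by
  refine (csInf_le (shigh_bddBelow f hx) ⟨δ, hδ, rfl⟩).trans ?_
  refine csSup_le ⟨f x, x, ⟨hx, by simpa using hδ, hx⟩, rfl⟩ ?_
  rintro _ ⟨y, ⟨h1, h2, _⟩, rfl⟩
  exact hc y h1 h2

lemma lt_of_shigh_lt {n : ℕ} {Om : Set (Pt n)} {f : Pt n → ℝ} {x : Pt n} (hx : x ∈ Om)
    (hf : BA Om f) {c : ℝ} (h : Shigh Om Om f x < c) :
    ∃ δ : ℝ, 0 < δ ∧ ∀ y ∈ Om, ‖y - x‖ < δ → f y < c := by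
  obtain ⟨a, ⟨δ, hδ, rfl⟩, hac⟩ := exists_lt_of_csInf_lt (by exact ⟨_, 1, one_pos, rfl⟩) h
  exact ⟨δ, hδ, fun y h1 h2 => (le_csSup (hf x hx δ) ⟨y, ⟨h1, h2, h1⟩, rfl⟩).trans_lt hac⟩

lemma half {n : ℕ} {Om : Set (Pt n)} {u v pl pu : Pt n → ℝ}
    (huv : ∀ x ∈ Om, u x ≤ v x)
    (hu : ∀ x ∈ Om, Shigh Om Om u x = v x) (hv : ∀ x ∈ Om, Shigh Om Om v x = v x)
    (hl : ∀ x ∈ Om, Shigh Om Om (fun y => - pl y) x = - pl x)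
    (hpu : ∀ x ∈ Om, Shigh Om Om pl x = pu x)
    (hle : ∀ x ∈ Om, pl x ≤ v x - u x) : ∀ x ∈ Om, pu x ≤ 0 := by
  have bv := BA_of_shigh hv
  have bl : BA Om (fun y => - pl y) := BA_of_shigh hl
  have key : ∀ x ∈ Om, pl x ≤ 0 := by
    intro x hx
    by_contra! hpos
    obtain ⟨δ, hδ, hd⟩ := lt_of_shigh_lt (c := - (pl x / 2)) hx bl (by rw [hl x hx]; linarith)
    have bu : BddAbove (u '' {y | y ∈ Om ∧ ‖y - x‖ < δ ∧ y ∈ Om}) := by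
      obtain ⟨M, hM⟩ := bv x hx δ
      refine ⟨M, ?_⟩
      rintro _ ⟨y, hy, rfl⟩
      exact (huv y hy.1).trans (hM ⟨y, hy, rfl⟩)
    obtain ⟨_, ⟨y, ⟨hy, hyx, _⟩, rfl⟩, hlt⟩ := exists_lt_of_lt_csSup
      (s := u '' {y | y ∈ Om ∧ ‖y - x‖ < δ ∧ y ∈ Om})
      (b := sSup (u '' {y | y ∈ Om ∧ ‖y - x‖ < δ ∧ y ∈ Om}) - pl x / 2)
      ⟨u x, x, ⟨hx, by simpa using hδ, hx⟩, rfl⟩ (by linarith)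
    have h1 : Shigh Om Om u y ≤ sSup (u '' {y | y ∈ Om ∧ ‖y - x‖ < δ ∧ y ∈ Om}) := by
      refine shigh_le hy (δ := δ - ‖y - x‖) (by linarith) ?_
      intro z hz hzy
      refine le_csSup bu ⟨z, ⟨hz, ?_, hz⟩, rfl⟩
      have := norm_sub_le_norm_sub_add_norm_sub z y x
      linarith
    rw [hu y hy] at h1
    have h2 := hd y hy hyx
    have h3 := hle y hy
    linarith
  intro x hx
  rw [← hpu x hx]
  exact shigh_le hx one_pos fun y hy _ => key y hy

lemma HContPair.neg' {n : ℕ} {Om : Set (Pt n)} {u v : Pt n → ℝ} (h : HContPair Om u v) :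
    HContPair Om (fun x => -(v x)) (fun x => -(u x)) := by
  obtain ⟨⟨h1, h2, h3⟩, h4⟩ := h
  refine ⟨⟨h2.neg', h1.neg', fun x hx => neg_le_neg (h3 x hx)⟩, ?_⟩
  intro p q hp hq hpq x hx
  have := h4 (fun x => - q x) (fun x => - p x) hq.neg' hp.neg' (fun x hx => by
    obtain ⟨a, b, c⟩ := hpq x hx
    exact ⟨by linarith, by linarith, by linarith⟩) x hx
  rw [Ilow_eq_neg] at this ⊢
  simp only [neg_neg] at this
  exact ⟨by rw [this.2], by linarith [this.1]⟩

lemma HContPair.S {n : ℕ} {Om : Set (Pt n)} {u v : Pt n → ℝ} (h : HContPair Om u v) :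
    (∀ x ∈ Om, Shigh Om Om u x = v x) ∧ (∀ x ∈ Om, Shigh Om Om v x = v x) := by
  obtain ⟨⟨h1, h2, h3⟩, h4⟩ := h
  exact ⟨fun x hx => (h4 u u h1 h1 (fun x hx => ⟨le_rfl, le_rfl, h3 x hx⟩) x hx).2,
    fun x hx => (h4 v v h2 h2 (fun x hx => ⟨h3 x hx, le_rfl, le_rfl⟩) x hx).2⟩

theorem stmt11 {n : ℕ} (Om : Set (Pt n)) (hOm : IsOpen Om)
    (u v : Pt n → ℝ) (h : HContPair Om u v) :
    HContPair Om (fun x => -(v x)) (fun x => -(u x)) ∧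
    HContPair Om (fun _ => (0 : ℝ)) (fun _ => (0 : ℝ)) ∧
    ∀ pl pu : Pt n → ℝ, HContPair Om pl pu →
      (∀ x ∈ Om, u x - v x ≤ pl x ∧ pl x ≤ pu x ∧ pu x ≤ v x - u x) →
      ∀ x ∈ Om, pl x = 0 ∧ pu x = 0 := by
  refine ⟨h.neg', ?_, ?_⟩
  · have hz : LocBddOn Om Om (fun _ => (0 : ℝ)) := fun x _ => ⟨1, one_pos, 1, by simp⟩
    refine ⟨⟨hz, hz, fun _ _ => le_rfl⟩, ?_⟩
    have S0 : ∀ f : Pt n → ℝ, (∀ x ∈ Om, f x = 0) → ∀ x ∈ Om, Shigh Om Om f x = 0 := by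
      intro f hf x hx
      refine le_antisymm (shigh_le hx one_pos fun y hy _ => (hf y hy).le) ?_
      refine Real.sInf_nonneg ?_
      rintro a ⟨δ, _, rfl⟩
      refine Real.sSup_nonneg ?_
      rintro _ ⟨y, hy, rfl⟩
      exact (hf y hy.1).ge
    intro p q _ _ hpq x hx
    have hp : ∀ x ∈ Om, p x = 0 := fun x hx => by
      obtain ⟨a, b, c⟩ := hpq x hx
      linarith
    have hq : ∀ x ∈ Om, q x = 0 := fun x hx => by
      obtain ⟨a, b, c⟩ := hpq x hx
      linarith
    rw [Ilow_eq_neg, S0 _ (fun y hy => by simp [hp y hy]) x hx, S0 q hq x hx]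
    simp
  · intro pl pu hp hle x hx
    have a := half h.1.2.2 h.S.1 h.S.2 hp.neg'.S.2 hp.S.1
      (fun x hx => (hle x hx).2.1.trans (hle x hx).2.2) x hx
    have b := half (pl := fun x => - pu x) (pu := fun x => - pl x) h.1.2.2 h.S.1 h.S.2
      (by simpa using hp.S.2) hp.neg'.S.1
      (fun x hx => by linarith [(hle x hx).1, (hle x hx).2.1]) x hx
    have c := (hle x hx).2.1
    constructor <;> linarith
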